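/- Let Γ ⊆ [0,1] be a set of real numbers satisfying the DCC. Then there exist real numbers ε, δ ∈ (0,1] such that for every k ∈ ℕ, every family b₁′, …, b_k′ of real numbers with each b_i′ ∈ [0,1] and each b_i′ lying in the interval [b − ε, b] for some b ∈ Γ, and every family n₁, …, n_k of non-negative integers, if ∑_{i=1}^k n_i·b_i′ − 1 > 0, then ∑_{i=1}^k n_i·b_i′ − 1 ≥ δ. -/

import Mathlib

/-- A set `S ⊆ ℝ` satisfies the descending chain condition (DCC) if every
nonincreasing sequence of elements of `S` is eventually constant. -/
def SatisfiesDCC (S : Set ℝ) : Prop :=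
  ∀ f : ℕ → ℝ, (∀ n, f n ∈ S) → (∀ n, f (n + 1) ≤ f n) → ∃ N, ∀ n ≥ N, f n = f N

theorem SatisfiesDCC.isWF {S : Set ℝ} (h : SatisfiesDCC S) : S.IsWF := by
  rw [Set.isWF_iff_no_descending_seq]
  intro f hf hmem
  obtain ⟨N, hN⟩ := h f hmem fun n => (hf n.lt_succ_self).le
  exact (hf N.lt_succ_self).ne (hN (N + 1) N.le_succ)

/-- The elements of a well-founded set of reals that exceed `a` exceed it by a uniform amount. -/
theorem exists_gap_of_isWF {S : Set ℝ} (h : S.IsWF) (a : ℝ) :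
    ∃ d ∈ Set.Ioc (0 : ℝ) 1, ∀ x ∈ S, a < x → a + d ≤ x := by
  by_cases hne : (S ∩ Set.Ioi a).Nonempty
  · have hwf : (S ∩ Set.Ioi a).IsWF := h.mono Set.inter_subset_left
    have hmin : a < hwf.min hne := (hwf.min_mem hne).2
    refine ⟨min (hwf.min hne - a) 1, ⟨lt_min (sub_pos.2 hmin) one_pos, min_le_right _ _⟩, ?_⟩
    intro x hx hax
    have hle : hwf.min hne ≤ x := hwf.min_le hne ⟨hx, hax⟩
    linarith [min_le_left (hwf.min hne - a) 1]
  · exact ⟨1, ⟨one_pos, le_rfl⟩, fun x hx hax => (hne ⟨x, hx, hax⟩).elim⟩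

/-- Lemma 3.4: if `Γ ⊆ [0,1]` satisfies the DCC, then there exist
`ε, δ ∈ (0,1]` such that any finite non-negative integer combination
`∑ nᵢ bᵢ'` with each `bᵢ' ∈ Γ_ε ∩ [0,1]` and `∑ nᵢ bᵢ' - 1 > 0`
satisfies `∑ nᵢ bᵢ' - 1 ≥ δ`. -/
theorem stmt_3 (Γ : Set ℝ) (hΓ : Γ ⊆ Set.Icc 0 1) (hDCC : SatisfiesDCC Γ) :
    ∃ ε δ : ℝ, ε ∈ Set.Ioc (0 : ℝ) 1 ∧ δ ∈ Set.Ioc (0 : ℝ) 1 ∧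
      ∀ (k : ℕ) (b' : Fin k → ℝ) (m : Fin k → ℕ),
        (∀ i, b' i ∈ Set.Icc (0 : ℝ) 1) →
        (∀ i, ∃ b ∈ Γ, b' i ∈ Set.Icc (b - ε) b) →
        (∑ i, (m i : ℝ) * b' i) - 1 > 0 →
        (∑ i, (m i : ℝ) * b' i) - 1 ≥ δ := by
  have hclosure : (AddSubmonoid.closure Γ : Set ℝ).IsWF :=
    (hDCC.isWF.isPWO.addSubmonoid_closure fun x hx => (hΓ hx).1).isWF
  obtain ⟨c, ⟨hc0, hc1⟩, hc⟩ := exists_gap_of_isWF hDCC.isWF 0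
  obtain ⟨d, ⟨hd0, hd1⟩, hd⟩ := exists_gap_of_isWF hclosure 1
  have hcd : 0 < c * d := mul_pos hc0 hd0
  have hcd_le : c * d ≤ c := mul_le_of_le_one_right hc0.le hd1
  refine ⟨c * d / 8, d / 4, ⟨by linarith, by linarith⟩, ⟨by linarith, by linarith⟩, ?_⟩
  intro k b' m hb' hb hsum
  have approx : ∀ i, ∃ β ∈ AddSubmonoid.closure Γ, b' i ≤ β ∧ β ≤ (1 + d / 4) * b' i := by
    intro i
    obtain ⟨b, hbΓ, hlow, hup⟩ := hb i
    rcases (hb' i).1.eq_or_lt with h0 | hpos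
    · exact ⟨0, zero_mem _, by simp [← h0]⟩
    · have hcb := hc b hbΓ (hpos.trans_le hup)
      have hhalf : c / 2 ≤ b' i := by linarith
      refine ⟨b, AddSubmonoid.subset_closure hbΓ, hup, ?_⟩
      linarith [mul_le_mul_of_nonneg_left hhalf hd0.le]
  choose β hβ hle hge using approx
  have hmem : ∑ i, (m i : ℝ) * β i ∈ AddSubmonoid.closure Γ :=
    sum_mem fun i _ => by simpa using nsmul_mem (hβ i) (m i)
  have hlower : ∑ i, (m i : ℝ) * b' i ≤ ∑ i, (m i : ℝ) * β i :=
    Finset.sum_le_sum fun i _ => mul_le_mul_of_nonneg_left (hle i) (m i).cast_nonneg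
  have hupper : ∑ i, (m i : ℝ) * β i ≤ (1 + d / 4) * ∑ i, (m i : ℝ) * b' i := by
    rw [Finset.mul_sum]
    refine Finset.sum_le_sum fun i _ => ?_
    rw [mul_left_comm]
    exact mul_le_mul_of_nonneg_left (hge i) (m i).cast_nonneg
  have hgap := hd _ hmem (by linarith)
  by_contra! hlt
  nlinarith
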